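/- Let n, m ≥ 1. In the real Lie algebra 𝔰𝔬(2n+2m) of skew-symmetric (2n+2m)×(2n+2m) real matrices with the commutator bracket ⁅A,B⁆ = AB − BA, let J_{2m} ∈ M_{2m}(ℝ) be the block-diagonal matrix consisting of m copies of the 2×2 block [[0,1],[−1,0]], and let T be the block-diagonal matrix diag(0_{2n}, J_{2m}) ∈ 𝔰𝔬(2n+2m). For M ∈ M_{2n×2m}(ℝ) let X(M) ∈ 𝔰𝔬(2n+2m) be the block matrix with zero diagonal blocks, upper-right block M and lower-left block −Mᵀ. Then for every M: ⁅T, X(M)⁆ = X(−M·J_{2m}), hence ⁅T, ⁅T, X(M)⁆⁆ = −X(M); in particular ⁅T, X(M)⁆ = 0 implies M = 0. -/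

import Mathlib

open Matrix
/-- The `2k × 2k` block-diagonal matrix consisting of `k` copies of the
`2 × 2` block `[[0, 1], [-1, 0]]`. -/
def Jmat (k : ℕ) : Matrix (Fin (2 * k)) (Fin (2 * k)) ℝ :=
  Matrix.of fun i j =>
    if (i : ℕ) + 1 = (j : ℕ) ∧ (i : ℕ) % 2 = 0 then 1
    else if (j : ℕ) + 1 = (i : ℕ) ∧ (j : ℕ) % 2 = 0 then -1
    else 0

theorem Jmat_transpose (k : ℕ) : (Jmat k)ᵀ = -Jmat k := by
  ext i j
  simp only [Matrix.transpose_apply, Matrix.neg_apply, Jmat, Matrix.of_apply]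
  split_ifs <;> first | omega | (norm_num; done) | (exfalso; simp_all; done)

theorem Jmat_mul_self (k : ℕ) : Jmat k * Jmat k = -1 := by
  ext i j
  rw [Matrix.mul_apply, Matrix.neg_apply, Matrix.one_apply]
  have hi := i.isLt
  rcases Nat.mod_two_eq_zero_or_one (i : ℕ) with h | h
  · rw [Finset.sum_eq_single (⟨(i : ℕ) + 1, by omega⟩ : Fin (2 * k))]
    · simp only [Jmat, Matrix.of_apply, Fin.ext_iff]
      split_ifs <;> first | omega | (norm_num; done) | (exfalso; simp_all; done)
    · intro b _ hb
      simp only [ne_eq, Fin.ext_iff] at hb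
      simp only [Jmat, Matrix.of_apply]
      split_ifs <;> first | omega | (norm_num; done) | (exfalso; simp_all; done)
    · simp
  · rw [Finset.sum_eq_single (⟨(i : ℕ) - 1, by omega⟩ : Fin (2 * k))]
    · simp only [Jmat, Matrix.of_apply, Fin.ext_iff]
      split_ifs <;> first | omega | (norm_num; done) | (exfalso; simp_all; done)
    · intro b _ hb
      simp only [ne_eq, Fin.ext_iff] at hb
      simp only [Jmat, Matrix.of_apply]
      split_ifs <;> first | omega | (norm_num; done) | (exfalso; simp_all; done)
    · simp

/-- In `𝔰𝔬(2n+2m)` with the commutator bracket, let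
`T = diag(0_{2n}, J_{2m})` and, for `M ∈ M_{2n×2m}(ℝ)`, let
`X(M) = [[0, M], [-Mᵀ, 0]]`.  Then `⁅T, X(M)⁆ = X(-M·J_{2m})`, hence
`⁅T, ⁅T, X(M)⁆⁆ = -X(M)`, and `⁅T, X(M)⁆ = 0` implies `M = 0`. -/
theorem stmt10 (n m : ℕ) (hn : 1 ≤ n) (hm : 1 ≤ m)
    (T : Matrix (Fin (2 * n) ⊕ Fin (2 * m)) (Fin (2 * n) ⊕ Fin (2 * m)) ℝ)
    (hT : T = Matrix.fromBlocks 0 0 0 (Jmat m))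
    (X : Matrix (Fin (2 * n)) (Fin (2 * m)) ℝ →
      Matrix (Fin (2 * n) ⊕ Fin (2 * m)) (Fin (2 * n) ⊕ Fin (2 * m)) ℝ)
    (hX : ∀ M, X M = Matrix.fromBlocks 0 M (-Mᵀ) 0) :
    ∀ M : Matrix (Fin (2 * n)) (Fin (2 * m)) ℝ,
      ⁅T, X M⁆ = X (-(M * Jmat m)) ∧
      ⁅T, ⁅T, X M⁆⁆ = -(X M) ∧
      (⁅T, X M⁆ = 0 → M = 0) := by
  have key : ∀ M, ⁅T, X M⁆ = X (-(M * Jmat m)) := by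
    intro M
    rw [hX, hX, hT, Ring.lie_def, Matrix.fromBlocks_multiply, Matrix.fromBlocks_multiply,
      sub_eq_add_neg, Matrix.fromBlocks_neg, Matrix.fromBlocks_add]
    simp [Matrix.transpose_mul, Jmat_transpose]
  have key2 : ∀ M, ⁅T, ⁅T, X M⁆⁆ = -(X M) := by
    intro M
    rw [key, key, hX, hX, Matrix.fromBlocks_neg]
    simp [Matrix.mul_assoc, Jmat_mul_self]
  intro M
  refine ⟨key M, key2 M, fun h => ?_⟩
  have h2 := key2 M
  rw [h, Ring.lie_def, mul_zero, zero_mul, sub_zero, hX, Matrix.fromBlocks_neg, eq_comm, ← Matrix.fromBlocks_zero,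
    Matrix.fromBlocks_inj] at h2
  exact neg_eq_zero.mp h2.2.1
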